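/- arXiv:2102.01019 — 2 statements merged into one kernel-verified Lean document; each statement's English description precedes it below -/
import Mathlib

section
/- Let h₁, h₂, p, q be complex numbers with h₁ ≠ 0, h₂ ≠ 0 and h₁ + h₂ = 1, and define α = −2·(p^3/h₁ + q^3/h₂), β = 3·(p^3·(p−2q)/h₁ − q^3·(2p−q)/h₂), γ = −6·(p^3·(p^2−5pq+10q^2)/h₁ + q^3·(10p^2−5pq+q^2)/h₂), and r = (p−q)^2. Then h₁·h₂·(12·(α·γ − β^2)·r − γ^2) = 432·β·p^3·q^3; in particular, if 12·(α·γ − β^2)·r − γ^2 ≠ 0, then h₁·h₂ = 432·β·p^3·q^3 / (12·(α·γ − β^2)·r − γ^2). -/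
/-!
With `u = p³/h₁` and `v = q³/h₂` the coefficients `α`, `β`, `γ` are linear forms in `u, v` over
`ℤ[p, q]`, and the quadratic form `12(αγ − β²)(p − q)² − γ²` splits as `432 β · (q³u + p³v)`.
Multiplying the last factor by `h₁h₂` gives `p³q³(h₁ + h₂)`.
-/

section CommRing

variable {R : Type*} [CommRing R]

/-- Heymann's principal quintic coefficient `α`, as a linear form in `u = p³/h₁` and `v = q³/h₂`.
Taking `u` and `v` as arguments avoids division. -/
def heymannAlpha (u v : R) : R :=
  -2 * (u + v)

/-- Heymann's principal quintic coefficient `β`, as a linear form in `u = p³/h₁` and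
`v = q³/h₂`. -/
def heymannBeta (p q u v : R) : R :=
  3 * (u * (p - 2 * q) - v * (2 * p - q))

/-- Heymann's principal quintic coefficient `γ`, as a linear form in `u = p³/h₁` and
`v = q³/h₂`. -/
def heymannGamma (p q u v : R) : R :=
  -6 * (u * (p ^ 2 - 5 * p * q + 10 * q ^ 2) + v * (10 * p ^ 2 - 5 * p * q + q ^ 2))

theorem heymann_quadratic_form_eq_beta_mul (p q u v : R) :
    12 * (heymannAlpha u v * heymannGamma p q u v - heymannBeta p q u v ^ 2) * (p - q) ^ 2
        - heymannGamma p q u v ^ 2 =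
      432 * heymannBeta p q u v * (q ^ 3 * u + p ^ 3 * v) := by
  unfold heymannAlpha heymannBeta heymannGamma
  ring

theorem heymann_product_relation_general (h₁ h₂ p q u v : R)
    (hu : h₁ * u = p ^ 3) (hv : h₂ * v = q ^ 3) :
    h₁ * h₂ *
        (12 * (heymannAlpha u v * heymannGamma p q u v - heymannBeta p q u v ^ 2) * (p - q) ^ 2
          - heymannGamma p q u v ^ 2) =
      432 * heymannBeta p q u v * p ^ 3 * q ^ 3 * (h₁ + h₂) := by
  have linear_factor : h₁ * h₂ * (q ^ 3 * u + p ^ 3 * v) = p ^ 3 * q ^ 3 * (h₁ + h₂) :=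
    calc
      h₁ * h₂ * (q ^ 3 * u + p ^ 3 * v) = h₂ * q ^ 3 * (h₁ * u) + h₁ * p ^ 3 * (h₂ * v) := by ring
      _ = h₂ * q ^ 3 * p ^ 3 + h₁ * p ^ 3 * q ^ 3 := by rw [hu, hv]
      _ = p ^ 3 * q ^ 3 * (h₁ + h₂) := by ring
  rw [heymann_quadratic_form_eq_beta_mul, mul_left_comm, linear_factor]
  ring

end CommRing

/-- The Heymann product relation `h₁·h₂·(12·(αγ − β²)·r − γ²) = 432·β·p³·q³`. -/
theorem heymann_product_relation (h₁ h₂ p q : ℂ) (hh₁ : h₁ ≠ 0) (hh₂ : h₂ ≠ 0)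
    (hsum : h₁ + h₂ = 1) :
    letI α : ℂ := -2 * (p ^ 3 / h₁ + q ^ 3 / h₂)
    letI β : ℂ := 3 * (p ^ 3 * (p - 2 * q) / h₁ - q ^ 3 * (2 * p - q) / h₂)
    letI γ : ℂ := -6 * (p ^ 3 * (p ^ 2 - 5 * p * q + 10 * q ^ 2) / h₁
      + q ^ 3 * (10 * p ^ 2 - 5 * p * q + q ^ 2) / h₂)
    letI r : ℂ := (p - q) ^ 2
    h₁ * h₂ * (12 * (α * γ - β ^ 2) * r - γ ^ 2) = 432 * β * p ^ 3 * q ^ 3 ∧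
    (12 * (α * γ - β ^ 2) * r - γ ^ 2 ≠ 0 →
      h₁ * h₂ = 432 * β * p ^ 3 * q ^ 3 / (12 * (α * γ - β ^ 2) * r - γ ^ 2)) := by
  have product_relation := heymann_product_relation_general h₁ h₂ p q (p ^ 3 / h₁) (q ^ 3 / h₂)
    (mul_div_cancel₀ _ hh₁) (mul_div_cancel₀ _ hh₂)
  simp only [heymannAlpha, heymannBeta, heymannGamma, div_mul_eq_mul_div, hsum, mul_one]
    at product_relation
  exact ⟨product_relation, fun hne => (eq_div_iff hne).mpr product_relation⟩
end

section
/- Let z, w be complex numbers and set α = −z·w^2, β = z^3·w, γ = −(z^5 − w^5) (Euler's parametrization). Then: (i) α^4 + α·β·γ − β^3 = 0, i.e. the leading coefficient of the central quadratic relation vanishes; and (ii) the polynomial identity (2·α^3·γ + 11·α^2·β^2 + β·γ^2)·w^4·(7·z^5 + w^5)^2 = (α·γ − 8·β^2)^2·f(z,w) holds. Consequently, if f(z,w) ≠ 0, then r = w^4·(7·z^5 + w^5)^2/(12·f(z,w)) satisfies (α^4 + α·β·γ − β^3)·(12r)^2 − (2·α^3·γ + 11·α^2·β^2 + β·γ^2)·(12r)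 + (α·γ − 8·β^2)^2 = 0. -/
/-- Klein's icosahedral vertex form. -/
noncomputable def kleinF (z w : ℂ) : ℂ := z * w * (z ^ 10 + 11 * z ^ 5 * w ^ 5 - w ^ 10)

section CommRing

variable {R : Type*} [CommRing R]

/-- Klein's icosahedral vertex form over an arbitrary commutative ring; over `ℂ` it is `kleinF`
by definition. -/
def icosahedralVertexForm (z w : R) : R :=
  z * w * (z ^ 10 + 11 * z ^ 5 * w ^ 5 - w ^ 10)

/-- The coefficient of `(12r)²` in the central quadratic relation of the principal quintic with
coefficients `α`, `β`, `γ`. -/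
def centralLeadingCoeff (α β γ : R) : R :=
  α ^ 4 + α * β * γ - β ^ 3

/-- The coefficient of `-12r` in the central quadratic relation; the minus sign is kept outside,
as in the paper. -/
def centralLinearCoeff (α β γ : R) : R :=
  2 * α ^ 3 * γ + 11 * α ^ 2 * β ^ 2 + β * γ ^ 2

/-- The constant coefficient of the central quadratic relation, as a quadratic in `12r`. -/
def centralConstantCoeff (α β γ : R) : R :=
  (α * γ - 8 * β ^ 2) ^ 2

theorem centralLeadingCoeff_euler (z w : R) :
    centralLeadingCoeff (-(z * w ^ 2)) (z ^ 3 * w) (-(z ^ 5 - w ^ 5)) = 0 := by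
  unfold centralLeadingCoeff
  ring

theorem centralLinearCoeff_euler (z w : R) :
    centralLinearCoeff (-(z * w ^ 2)) (z ^ 3 * w) (-(z ^ 5 - w ^ 5)) =
      z ^ 2 * icosahedralVertexForm z w := by
  unfold centralLinearCoeff icosahedralVertexForm
  ring

theorem centralConstantCoeff_euler (z w : R) :
    centralConstantCoeff (-(z * w ^ 2)) (z ^ 3 * w) (-(z ^ 5 - w ^ 5)) =
      z ^ 2 * (w ^ 4 * (7 * z ^ 5 + w ^ 5) ^ 2) := by
  have base_eq : -(z * w ^ 2) * -(z ^ 5 - w ^ 5) - 8 * (z ^ 3 * w) ^ 2 =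
      -(z * w ^ 2 * (7 * z ^ 5 + w ^ 5)) := by ring
  rw [centralConstantCoeff, base_eq]
  ring

theorem centralLinearCoeff_mul_eq_centralConstantCoeff_mul (z w : R) :
    centralLinearCoeff (-(z * w ^ 2)) (z ^ 3 * w) (-(z ^ 5 - w ^ 5)) *
        (w ^ 4 * (7 * z ^ 5 + w ^ 5) ^ 2) =
      centralConstantCoeff (-(z * w ^ 2)) (z ^ 3 * w) (-(z ^ 5 - w ^ 5)) *
        icosahedralVertexForm z w := by
  rw [centralLinearCoeff_euler, centralConstantCoeff_euler, mul_right_comm]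

/-- The left-hand side of the central quadratic relation, with `x` in place of `12r`. -/
def centralQuadratic (α β γ x : R) : R :=
  centralLeadingCoeff α β γ * x ^ 2 - centralLinearCoeff α β γ * x + centralConstantCoeff α β γ

theorem centralQuadratic_euler (z w x : R) :
    centralQuadratic (-(z * w ^ 2)) (z ^ 3 * w) (-(z ^ 5 - w ^ 5)) x =
      z ^ 2 * (w ^ 4 * (7 * z ^ 5 + w ^ 5) ^ 2 - icosahedralVertexForm z w * x) := by
  rw [centralQuadratic, centralLeadingCoeff_euler, centralLinearCoeff_euler,
    centralConstantCoeff_euler]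
  ring

theorem centralQuadratic_euler_eq_zero {z w x : R}
    (hx : icosahedralVertexForm z w * x = w ^ 4 * (7 * z ^ 5 + w ^ 5) ^ 2) :
    centralQuadratic (-(z * w ^ 2)) (z ^ 3 * w) (-(z ^ 5 - w ^ 5)) x = 0 := by
  rw [centralQuadratic_euler, hx, sub_self, mul_zero]

end CommRing

theorem euler_central_quadratic_general {K : Type*} [Field K] (twelve_ne_zero : (12 : K) ≠ 0)
    (z w : K) :
    letI α : K := -(z * w ^ 2)
    letI β : K := z ^ 3 * w
    letI γ : K := -(z ^ 5 - w ^ 5)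
    centralLeadingCoeff α β γ = 0 ∧
    centralLinearCoeff α β γ * (w ^ 4 * (7 * z ^ 5 + w ^ 5) ^ 2) =
      centralConstantCoeff α β γ * icosahedralVertexForm z w ∧
    (icosahedralVertexForm z w ≠ 0 →
      letI r : K := w ^ 4 * (7 * z ^ 5 + w ^ 5) ^ 2 / (12 * icosahedralVertexForm z w)
      centralQuadratic α β γ (12 * r) = 0) := by
  refine ⟨centralLeadingCoeff_euler z w,
    centralLinearCoeff_mul_eq_centralConstantCoeff_mul z w,
    fun hf => centralQuadratic_euler_eq_zero ?_⟩
  field_simp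

/-- Under Euler's parametrization the central quadratic relation becomes linear,
and `r = w⁴·(7z⁵ + w⁵)²/(12·f)` solves it. -/
theorem euler_central_quadratic (z w : ℂ) :
    letI α : ℂ := -(z * w ^ 2)
    letI β : ℂ := z ^ 3 * w
    letI γ : ℂ := -(z ^ 5 - w ^ 5)
    (α ^ 4 + α * β * γ - β ^ 3 = 0) ∧
    ((2 * α ^ 3 * γ + 11 * α ^ 2 * β ^ 2 + β * γ ^ 2) * (w ^ 4 * (7 * z ^ 5 + w ^ 5) ^ 2)
      = (α * γ - 8 * β ^ 2) ^ 2 * kleinF z w) ∧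
    (kleinF z w ≠ 0 →
      letI r : ℂ := w ^ 4 * (7 * z ^ 5 + w ^ 5) ^ 2 / (12 * kleinF z w)
      (α ^ 4 + α * β * γ - β ^ 3) * (12 * r) ^ 2
        - (2 * α ^ 3 * γ + 11 * α ^ 2 * β ^ 2 + β * γ ^ 2) * (12 * r)
        + (α * γ - 8 * β ^ 2) ^ 2 = 0) :=
  euler_central_quadratic_general (by norm_num) z w
end
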